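/- arXiv:2604.26863 — 2 statements merged into one kernel-verified Lean document; each statement's English description precedes it below -/
import Mathlib

section
/- Let κ = (κ^h, κ^c) ∈ L²([0,1]; ℂ²). For every z = (z^h, z^c) in D(A), the perturbed operator A − κC is quasi-dissipative: Re ⟨z, (A − κC) z⟩ ≤ ( |M|₂ + ‖κ‖²/u₂ )·‖z‖², where (A − κC)z := Az − z^c(0)·κ, ⟨·,·⟩ is the L² inner product on [0,1] and ‖·‖ the L² norm. -/
open MeasureTheory intervalIntegral

/-- A function `f : ℝ → ℂ` is `H¹` on `[0,1]` with derivative `f'`. -/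
def IsH1 (f f' : ℝ → ℂ) : Prop :=
  ContinuousOn f (Set.Icc 0 1) ∧
  IntervalIntegrable f' volume 0 1 ∧
  IntervalIntegrable (fun x => ‖f' x‖ ^ 2) volume 0 1 ∧
  ∀ x ∈ Set.Icc (0:ℝ) 1, f x = f 0 + ∫ t in (0:ℝ)..x, f' t

/-- Membership in `L²([0,1]; ℂ)`. -/
def MemL2 (f : ℝ → ℂ) : Prop :=
  AEStronglyMeasurable f (volume.restrict (Set.Icc (0:ℝ) 1)) ∧
  IntervalIntegrable (fun x => ‖f x‖ ^ 2) volume 0 1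

/-- The spectral (operator) norm of the coupling matrix `M = [[−c₁, c₁], [c₂, −c₂]]`. -/
noncomputable def specNormM (c₁ c₂ : ℝ) : ℝ :=
  ‖Matrix.toEuclideanCLM (𝕜 := ℝ) !![-c₁, c₁; c₂, -c₂]‖

lemma aux_real (f f' : ℝ → ℝ) (hi : IntervalIntegrable f' volume 0 1)
    (h : ∀ x ∈ Set.Icc (0:ℝ) 1, f x = f 0 + ∫ t in (0:ℝ)..x, f' t) :
    ∫ x in (0:ℝ)..1, f x * f' x = (f 1 ^ 2 - f 0 ^ 2) / 2 := by
  set g : ℝ → ℝ := fun x => f 0 + ∫ t in (0:ℝ)..x, f' t with hg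
  have hac : AbsolutelyContinuousOnInterval g 0 1 := by
    have h1 : AbsolutelyContinuousOnInterval (fun _ : ℝ => f 0) 0 1 :=
      ((LipschitzWith.const (f 0)).lipschitzOnWith (s := Set.uIcc 0 1)).absolutelyContinuousOnInterval
    exact h1.add (hi.absolutelyContinuousOnInterval_intervalIntegral (c := 0) (by simp))
  have key := hac.integral_deriv_mul_eq_sub hac
  have hcongr : ∫ x in (0:ℝ)..1, deriv g x * g x + g x * deriv g x
      = ∫ x in (0:ℝ)..1, 2 * (f x * f' x) := by
    apply intervalIntegral.integral_congr_ae
    filter_upwards [hi.ae_hasDerivAt_integral] with x hx hx1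
    have hx2 : x ∈ Set.uIcc (0:ℝ) 1 := Set.uIoc_subset_uIcc hx1
    have hd : deriv g x = f' x := ((hx hx2 0 (by simp)).const_add (f 0)).deriv
    have hgx : g x = f x := (h x (by simpa using hx2)).symm
    rw [hd, hgx]; ring
  rw [hcongr, intervalIntegral.integral_const_mul] at key
  have g1 : g 1 = f 1 := (h 1 (by simp)).symm
  have g0 : g 0 = f 0 := (h 0 (by simp)).symm
  rw [g1, g0] at key
  linarith

lemma aux_re {f : ℝ → ℂ} {a b : ℝ} (h : IntervalIntegrable f volume a b) :
    IntervalIntegrable (fun x => (f x).re) volume a b :=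
  ⟨h.1.re, h.2.re⟩

lemma aux_im {f : ℝ → ℂ} {a b : ℝ} (h : IntervalIntegrable f volume a b) :
    IntervalIntegrable (fun x => (f x).im) volume a b :=
  ⟨h.1.im, h.2.im⟩

lemma aux_int_re {f : ℝ → ℂ} {a b : ℝ} (h : IntervalIntegrable f volume a b) :
    (∫ x in a..b, f x).re = ∫ x in a..b, (f x).re :=
  (Complex.reCLM.intervalIntegral_comp_comm h).symm

lemma aux_int_im {f : ℝ → ℂ} {a b : ℝ} (h : IntervalIntegrable f volume a b) :
    (∫ x in a..b, f x).im = ∫ x in a..b, (f x).im :=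
  (Complex.imCLM.intervalIntegral_comp_comm h).symm

lemma aux_sub {f : ℝ → ℂ} (h : IntervalIntegrable f volume 0 1) {x : ℝ}
    (hx : x ∈ Set.Icc (0:ℝ) 1) : IntervalIntegrable f volume 0 x :=
  h.mono_set (by
    rw [Set.uIcc_of_le hx.1, Set.uIcc_of_le zero_le_one]
    exact Set.Icc_subset_Icc_right hx.2)

lemma aux_energy_int {f f' : ℝ → ℂ} (h : IsH1 f f') :
    IntervalIntegrable (fun x => (f x).re * (f' x).re + (f x).im * (f' x).im) volume 0 1 := by
  obtain ⟨hc, hi, -, -⟩ := h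
  rw [← Set.uIcc_of_le zero_le_one] at hc
  exact ((aux_re hi).continuousOn_mul (Complex.continuous_re.comp_continuousOn hc)).add
    ((aux_im hi).continuousOn_mul (Complex.continuous_im.comp_continuousOn hc))

lemma aux_energy {f f' : ℝ → ℂ} (h : IsH1 f f') :
    ∫ x in (0:ℝ)..1, ((f x).re * (f' x).re + (f x).im * (f' x).im)
      = (‖f 1‖ ^ 2 - ‖f 0‖ ^ 2) / 2 := by
  obtain ⟨hc, hi, -, hf⟩ := h
  rw [← Set.uIcc_of_le zero_le_one] at hc
  have h1 := (aux_re hi).continuousOn_mul (Complex.continuous_re.comp_continuousOn hc)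
  have h2 := (aux_im hi).continuousOn_mul (Complex.continuous_im.comp_continuousOn hc)
  have e1 := aux_real (fun x => (f x).re) (fun x => (f' x).re) (aux_re hi) (by
    intro x hx
    have := congrArg Complex.re (hf x hx)
    rw [Complex.add_re, aux_int_re (aux_sub hi hx)] at this
    exact this)
  have e2 := aux_real (fun x => (f x).im) (fun x => (f' x).im) (aux_im hi) (by
    intro x hx
    have := congrArg Complex.im (hf x hx)
    rw [Complex.add_im, aux_int_im (aux_sub hi hx)] at this
    exact this)
  have e3 := intervalIntegral.integral_add h1 h2
  simp only [Function.comp_apply] at e3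
  rw [e3, e1, e2, Complex.sq_norm, Complex.sq_norm, Complex.normSq_apply, Complex.normSq_apply]
  ring

lemma aux_memL2 {f : ℝ → ℂ} (h : MemL2 f) : IntervalIntegrable f volume 0 1 := by
  obtain ⟨hm, hi⟩ := h
  have hb : IntervalIntegrable (fun x => 1 + ‖f x‖ ^ 2) volume 0 1 :=
    intervalIntegrable_const.add hi
  refine hb.mono_fun ?_ ?_
  · rw [Set.uIoc_of_le zero_le_one]
    exact hm.mono_measure (Measure.restrict_mono Set.Ioc_subset_Icc_self le_rfl)
  · refine Filter.Eventually.of_forall fun x => ?_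
    simp only
    rw [Real.norm_of_nonneg (by positivity)]
    nlinarith [sq_nonneg (‖f x‖ - 1), norm_nonneg (f x)]

lemma aux_spec (c₁ c₂ x y : ℝ) :
    x * (-c₁ * (x - y)) + y * (c₂ * (x - y)) ≤ specNormM c₁ c₂ * (x ^ 2 + y ^ 2) := by
  set v : EuclideanSpace ℝ (Fin 2) := !₂[x, y] with hv
  set T := Matrix.toEuclideanCLM (𝕜 := ℝ) !![-c₁, c₁; c₂, -c₂] with hT
  have h1 : inner ℝ v (T v) ≤ ‖v‖ * ‖T v‖ := real_inner_le_norm _ _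
  have h2 : ‖T v‖ ≤ ‖T‖ * ‖v‖ := T.le_opNorm v
  have h3 : inner ℝ v (T v) = x * (-c₁ * (x - y)) + y * (c₂ * (x - y)) := by
    simp [hv, hT, PiLp.inner_apply, Fin.sum_univ_two, Matrix.toEuclideanCLM_toLp,
      Matrix.mulVec, dotProduct]
    ring
  have h4 : ‖v‖ ^ 2 = x ^ 2 + y ^ 2 := by
    rw [EuclideanSpace.norm_sq_eq]; simp [hv]
  rw [specNormM, ← hT, ← h3, ← h4]
  nlinarith [norm_nonneg v]

lemma aux_point (u₁ u₂ c₁ c₂ : ℝ) (a b a' b' k l w : ℂ) :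
    ((starRingEnd ℂ) a * (-(u₁ : ℂ) * a' - (c₁ : ℂ) * (a - b) - w * k) +
      (starRingEnd ℂ) b * ((u₂ : ℂ) * b' + (c₂ : ℂ) * (a - b) - w * l)).re
    ≤ -u₁ * (a.re * a'.re + a.im * a'.im) + u₂ * (b.re * b'.re + b.im * b'.im)
      + specNormM c₁ c₂ * (‖a‖ ^ 2 + ‖b‖ ^ 2) + ‖w‖ * (‖a‖ * ‖k‖ + ‖b‖ * ‖l‖) := by
  have h1 := aux_spec c₁ c₂ a.re b.re
  have h2 := aux_spec c₁ c₂ a.im b.im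
  have h3 : -((starRingEnd ℂ) a * (w * k)).re ≤ ‖w‖ * (‖a‖ * ‖k‖) := by
    have := (neg_le_abs _).trans (Complex.abs_re_le_norm ((starRingEnd ℂ) a * (w * k)))
    rw [norm_mul, norm_mul, RCLike.norm_conj] at this
    linarith
  have h4 : -((starRingEnd ℂ) b * (w * l)).re ≤ ‖w‖ * (‖b‖ * ‖l‖) := by
    have := (neg_le_abs _).trans (Complex.abs_re_le_norm ((starRingEnd ℂ) b * (w * l)))
    rw [norm_mul, norm_mul, RCLike.norm_conj] at this
    linarith
  rw [Complex.sq_norm, Complex.sq_norm, Complex.normSq_apply, Complex.normSq_apply]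
  simp only [Complex.mul_re, Complex.mul_im, Complex.add_re, Complex.add_im, Complex.sub_re,
    Complex.sub_im, Complex.neg_re, Complex.neg_im, Complex.conj_re, Complex.conj_im,
    Complex.ofReal_re, Complex.ofReal_im] at h3 h4 ⊢
  linarith

/-- for `κ ∈ L²([0,1]; ℂ²)` and `z ∈ D(A)`, the perturbed operator
`A − κC` is quasi-dissipative: `Re ⟨z, (A − κC)z⟩ ≤ (|M|₂ + ‖κ‖²/u₂) ‖z‖²`,
where `(A − κC)z = Az − z^c(0)·κ`. -/
theorem perturbed_operator_quasi_dissipative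
    (u₁ u₂ c₁ c₂ : ℝ) (hu₁ : 0 < u₁) (hu₂ : 0 < u₂) (hc₁ : 0 < c₁) (hc₂ : 0 < c₂)
    (κh κc : ℝ → ℂ) (hκh : MemL2 κh) (hκc : MemL2 κc)
    (zh zc zh' zc' : ℝ → ℂ)
    (hzh : IsH1 zh zh') (hzc : IsH1 zc zc')
    (hbc0 : zh 0 = 0) (hbc1 : zc 1 = 0) :
    (∫ x in (0:ℝ)..1,
        ((starRingEnd ℂ) (zh x) *
            (-(u₁ : ℂ) * zh' x - (c₁ : ℂ) * (zh x - zc x) - zc 0 * κh x) +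
          (starRingEnd ℂ) (zc x) *
            ((u₂ : ℂ) * zc' x + (c₂ : ℂ) * (zh x - zc x) - zc 0 * κc x))).re
      ≤ (specNormM c₁ c₂
            + (∫ x in (0:ℝ)..1, (‖κh x‖ ^ 2 + ‖κc x‖ ^ 2)) / u₂)
          * ∫ x in (0:ℝ)..1, (‖zh x‖ ^ 2 + ‖zc x‖ ^ 2) := by
  have hih := aux_memL2 hκh
  have hic := aux_memL2 hκc
  have hch : ContinuousOn zh (Set.uIcc 0 1) := by
    rw [Set.uIcc_of_le zero_le_one]; exact hzh.1
  have hcc : ContinuousOn zc (Set.uIcc 0 1) := by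
    rw [Set.uIcc_of_le zero_le_one]; exact hzc.1
  set m := specNormM c₁ c₂ with hm
  set K := ∫ x in (0:ℝ)..1, (‖κh x‖ ^ 2 + ‖κc x‖ ^ 2) with hK
  set Z := ∫ x in (0:ℝ)..1, (‖zh x‖ ^ 2 + ‖zc x‖ ^ 2) with hZ
  set P := ∫ x in (0:ℝ)..1, (‖zh x‖ * ‖κh x‖ + ‖zc x‖ * ‖κc x‖) with hP
  have iK : IntervalIntegrable (fun x => ‖κh x‖ ^ 2 + ‖κc x‖ ^ 2) volume 0 1 := hκh.2.add hκc.2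
  have iZ : IntervalIntegrable (fun x => ‖zh x‖ ^ 2 + ‖zc x‖ ^ 2) volume 0 1 :=
    ((hch.norm.pow 2).add (hcc.norm.pow 2)).intervalIntegrable
  have iP : IntervalIntegrable (fun x => ‖zh x‖ * ‖κh x‖ + ‖zc x‖ * ‖κc x‖) volume 0 1 :=
    (hih.norm.continuousOn_mul hch.norm).add (hic.norm.continuousOn_mul hcc.norm)
  have hZ0 : 0 ≤ Z := intervalIntegral.integral_nonneg zero_le_one fun x _ => by positivity
  have hK0 : 0 ≤ K := intervalIntegral.integral_nonneg zero_le_one fun x _ => by positivity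
  have hCS : P ^ 2 ≤ Z * K := by
    have hq : ∀ t : ℝ, 0 ≤ Z * (t * t) + (-2 * P) * t + K := by
      intro t
      have e : ∫ x in (0:ℝ)..1, ((t * t) * (‖zh x‖ ^ 2 + ‖zc x‖ ^ 2)
          + (-2 * t) * (‖zh x‖ * ‖κh x‖ + ‖zc x‖ * ‖κc x‖) + (‖κh x‖ ^ 2 + ‖κc x‖ ^ 2))
          = (t * t) * Z + (-2 * t) * P + K := by
        rw [intervalIntegral.integral_add ((iZ.const_mul _).add (iP.const_mul _)) iK,
          intervalIntegral.integral_add (iZ.const_mul _) (iP.const_mul _),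
          intervalIntegral.integral_const_mul, intervalIntegral.integral_const_mul]
      have p : 0 ≤ ∫ x in (0:ℝ)..1, ((t * t) * (‖zh x‖ ^ 2 + ‖zc x‖ ^ 2)
          + (-2 * t) * (‖zh x‖ * ‖κh x‖ + ‖zc x‖ * ‖κc x‖) + (‖κh x‖ ^ 2 + ‖κc x‖ ^ 2)) := by
        refine intervalIntegral.integral_nonneg zero_le_one fun x _ => ?_
        nlinarith [sq_nonneg (t * ‖zh x‖ - ‖κh x‖), sq_nonneg (t * ‖zc x‖ - ‖κc x‖)]
      rw [e] at p
      linarith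
    have := discrim_le_zero hq
    rw [discrim] at this
    nlinarith
  have iG : IntervalIntegrable (fun x => (starRingEnd ℂ) (zh x) *
            (-(u₁ : ℂ) * zh' x - (c₁ : ℂ) * (zh x - zc x) - zc 0 * κh x) +
          (starRingEnd ℂ) (zc x) *
            ((u₂ : ℂ) * zc' x + (c₂ : ℂ) * (zh x - zc x) - zc 0 * κc x)) volume 0 1 := by
    have i0 : IntervalIntegrable (fun x => zh x - zc x) volume 0 1 :=
      (hch.sub hcc).intervalIntegrable
    have i1 := ((hzh.2.1.const_mul (-(u₁:ℂ))).sub (i0.const_mul (c₁:ℂ))).sub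
      (hih.const_mul (zc 0))
    have i2 := ((hzc.2.1.const_mul (u₂:ℂ)).add (i0.const_mul (c₂:ℂ))).sub
      (hic.const_mul (zc 0))
    exact (i1.continuousOn_mul (Complex.continuous_conj.comp_continuousOn hch)).add
      (i2.continuousOn_mul (Complex.continuous_conj.comp_continuousOn hcc))
  have iEh := aux_energy_int hzh
  have iEc := aux_energy_int hzc
  have eh := aux_energy hzh
  have ec := aux_energy hzc
  rw [aux_int_re iG]
  have j1 := (iEh.const_mul (-u₁)).add (iEc.const_mul u₂)
  have j2 := j1.add (iZ.const_mul m)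
  have j3 := j2.add (iP.const_mul ‖zc 0‖)
  have hle := intervalIntegral.integral_mono_on zero_le_one (aux_re iG) j3 (fun x _ =>
    aux_point u₁ u₂ c₁ c₂ (zh x) (zc x) (zh' x) (zc' x) (κh x) (κc x) (zc 0))
  refine hle.trans ?_
  rw [intervalIntegral.integral_add j2 (iP.const_mul _),
    intervalIntegral.integral_add j1 (iZ.const_mul _),
    intervalIntegral.integral_add (iEh.const_mul _) (iEc.const_mul _),
    intervalIntegral.integral_const_mul, intervalIntegral.integral_const_mul,
    intervalIntegral.integral_const_mul, intervalIntegral.integral_const_mul, eh, ec, hbc0, hbc1,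
    ← hZ, ← hP, norm_zero]
  have hf : ‖zc 0‖ * P ≤ u₂ / 2 * ‖zc 0‖ ^ 2 + K / u₂ * Z := by
    have h1 : K / u₂ * Z = K * Z / u₂ := by ring
    have h2 : P ^ 2 / (2 * u₂) ≤ K * Z / u₂ := by
      rw [div_le_div_iff₀ (by positivity) hu₂]
      nlinarith [mul_nonneg hK0 hZ0, mul_nonneg (mul_nonneg hK0 hZ0) hu₂.le]
    have h3 : ‖zc 0‖ * P ≤ u₂ / 2 * ‖zc 0‖ ^ 2 + P ^ 2 / (2 * u₂) := by
      have : u₂ / 2 * ‖zc 0‖ ^ 2 + P ^ 2 / (2 * u₂) - ‖zc 0‖ * P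
          = (u₂ * ‖zc 0‖ - P) ^ 2 / (2 * u₂) := by
        field_simp
        ring
      have : 0 ≤ (u₂ * ‖zc 0‖ - P) ^ 2 / (2 * u₂) := by positivity
      linarith
    linarith
  have : 0 ≤ u₁ * ‖zh 1‖ ^ 2 := by positivity
  rw [add_mul]
  nlinarith
end

section
/- Let κ = (κ^h, κ^c) ∈ L²([0,1]; ℂ²). The operator A − κC is closed: if (z_n) is a sequence in D(A), z = (z^h, z^c) and y = (y^h, y^c) are in L²([0,1]; ℂ²), z_n → z in L², and w_n := A z_n − z_n^c(0)·κ → y in L², then z (after modification on a null set) belongs to D(A) and satisfies A z − z^c(0)·κ = y, i.e. −u₁ (z^h)' − c₁(z^h − z^c) − z^c(0)·κ^h = y^h and u₂ (z^c)' + c₂(z^h − z^c) − z^c(0)·κ^c = y^c almost everywhere on [0,1]. -/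
open MeasureTheory intervalIntegral Filter

noncomputable abbrev muI : Measure ℝ := volume.restrict (Set.Ioc (0:ℝ) 1)

lemma muI_eq : volume.restrict (Set.Icc (0:ℝ) 1) = muI :=
  (Measure.restrict_congr_set Ioc_ae_eq_Icc).symm

lemma memLp_of_sq {f : ℝ → ℂ} (h1 : AEStronglyMeasurable f muI)
    (h2 : IntervalIntegrable (fun x => ‖f x‖ ^ 2) volume 0 1) : MemLp f 2 muI := by
  rw [memLp_two_iff_integrable_sq_norm h1]
  exact (intervalIntegrable_iff_integrableOn_Ioc_of_le zero_le_one).1 h2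

lemma MemL2.memLp {f : ℝ → ℂ} (h : MemL2 f) : MemLp f 2 muI :=
  memLp_of_sq (muI_eq ▸ h.1) h.2

lemma IsH1.memLp' {f f' : ℝ → ℂ} (h : IsH1 f f') : MemLp f' 2 muI :=
  memLp_of_sq ((intervalIntegrable_iff_integrableOn_Ioc_of_le zero_le_one).1 h.2.1).1 h.2.2.1

lemma IsH1.memLp {f f' : ℝ → ℂ} (h : IsH1 f f') : MemLp f 2 muI := by
  apply memLp_of_sq
  · rw [← muI_eq]
    exact h.1.aestronglyMeasurable measurableSet_Icc
  · apply ContinuousOn.intervalIntegrable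
    rw [Set.uIcc_of_le zero_le_one]
    exact h.1.norm.pow 2

lemma MemLp.ii {f : ℝ → ℂ} (h : MemLp f 2 muI) : IntervalIntegrable f volume 0 1 :=
  (intervalIntegrable_iff_integrableOn_Ioc_of_le zero_le_one).2 (h.integrable (by norm_num))

lemma MemLp.iisq {f : ℝ → ℂ} (h : MemLp f 2 muI) :
    IntervalIntegrable (fun x => ‖f x‖ ^ 2) volume 0 1 :=
  (intervalIntegrable_iff_integrableOn_Ioc_of_le zero_le_one).2
    ((memLp_two_iff_integrable_sq_norm h.1).1 h)

lemma MemLp.iix {f : ℝ → ℂ} (h : MemLp f 2 muI) {x : ℝ} (hx : x ∈ Set.Icc (0:ℝ) 1) :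
    IntervalIntegrable f volume 0 x := by
  apply (MemLp.ii h).mono_set
  rw [Set.uIcc_of_le zero_le_one, Set.uIcc_of_le hx.1]
  exact Set.Icc_subset_Icc le_rfl hx.2

lemma isH1_of {g : ℝ → ℂ} (h : MemLp g 2 muI) (c : ℂ) :
    IsH1 (fun x => c + ∫ t in (0:ℝ)..x, g t) g := by
  refine ⟨?_, MemLp.ii h, MemLp.iisq h, fun x _ => by simp⟩
  apply continuousOn_const.add
  have := intervalIntegral.continuousOn_primitive_interval' (MemLp.ii h) (a := 0) (by simp)
  rwa [Set.uIcc_of_le zero_le_one] at this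

lemma eLp_two_tendsto {F : ℕ → ℝ → ℂ} (hF : ∀ n, MemLp (F n) 2 muI)
    (h : Tendsto (fun n => ∫ x in (0:ℝ)..1, ‖F n x‖ ^ 2) atTop (nhds 0)) :
    Tendsto (fun n => eLpNorm (F n) 2 muI) atTop (nhds 0) := by
  have e : ∀ n, eLpNorm (F n) 2 muI
      = ENNReal.ofReal ((∫ x in (0:ℝ)..1, ‖F n x‖ ^ 2) ^ ((1:ℝ)/2)) := by
    intro n
    rw [(hF n).eLpNorm_eq_integral_rpow_norm (by norm_num) (by norm_num),
      intervalIntegral.integral_of_le zero_le_one]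
    norm_num
  simp_rw [e]
  have h2 := (h.rpow_const (p := (1:ℝ)/2) (Or.inr (by norm_num)))
  have h3 := ENNReal.tendsto_ofReal h2
  simpa using h3

lemma int_tendsto {F : ℕ → ℝ → ℂ} (hF : ∀ n, MemLp (F n) 2 muI)
    (h : Tendsto (fun n => ∫ x in (0:ℝ)..1, ‖F n x‖ ^ 2) atTop (nhds 0))
    {x : ℝ} (hx : x ∈ Set.Icc (0:ℝ) 1) :
    Tendsto (fun n => ∫ t in (0:ℝ)..x, F n t) atTop (nhds 0) := by
  have h2 := eLp_two_tendsto hF h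
  have hp : IsProbabilityMeasure muI := ⟨by simp [muI]⟩
  have h1 : Tendsto (fun n => eLpNorm (F n) 1 muI) atTop (nhds 0) :=
    tendsto_of_tendsto_of_tendsto_of_le_of_le tendsto_const_nhds h2 (fun _ => zero_le)
      (fun n => eLpNorm_le_eLpNorm_of_exponent_le (by norm_num) (hF n).1)
  have h3 := tendsto_setIntegral_of_L1' (μ := muI) (fun _ => (0:ℂ)) aestronglyMeasurable_const
    (F := F) (l := atTop)
    (Eventually.of_forall fun n => (hF n).integrable (by norm_num))
    (by simpa [Pi.sub_def] using h1) (Set.Ioc 0 x)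
  simp only [MeasureTheory.integral_zero] at h3
  refine h3.congr fun n => ?_
  rw [intervalIntegral.integral_of_le hx.1, Measure.restrict_restrict measurableSet_Ioc,
    Set.inter_eq_left.2 (Set.Ioc_subset_Ioc le_rfl hx.2)]

lemma sub_ae {F : ℕ → ℝ → ℂ} (hF : ∀ n, MemLp (F n) 2 muI)
    (h : Tendsto (fun n => ∫ x in (0:ℝ)..1, ‖F n x‖ ^ 2) atTop (nhds 0)) :
    ∃ ns : ℕ → ℕ, StrictMono ns ∧
      ∀ᵐ x ∂muI, Tendsto (fun n => F (ns n) x) atTop (nhds 0) := by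
  have h2 := eLp_two_tendsto hF h
  have := tendstoInMeasure_of_tendsto_eLpNorm (μ := muI) (p := 2) (f := F) (g := fun _ => 0)
    (l := atTop) (by norm_num) (fun n => (hF n).1) aestronglyMeasurable_const
    (by simpa [Pi.sub_def] using h2)
  exact this.exists_seq_tendsto_ae

lemma split_sq {F G : ℕ → ℝ → ℂ} (hF : ∀ n, MemLp (F n) 2 muI) (hG : ∀ n, MemLp (G n) 2 muI)
    (h : Tendsto (fun n => ∫ x in (0:ℝ)..1, (‖F n x‖ ^ 2 + ‖G n x‖ ^ 2)) atTop (nhds 0)) :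
    Tendsto (fun n => ∫ x in (0:ℝ)..1, ‖F n x‖ ^ 2) atTop (nhds 0) ∧
    Tendsto (fun n => ∫ x in (0:ℝ)..1, ‖G n x‖ ^ 2) atTop (nhds 0) := by
  have nn : ∀ (H : ℝ → ℂ), 0 ≤ ∫ x in (0:ℝ)..1, ‖H x‖ ^ 2 := fun H =>
    intervalIntegral.integral_nonneg zero_le_one fun x _ => by positivity
  have e : ∀ n, (∫ x in (0:ℝ)..1, (‖F n x‖ ^ 2 + ‖G n x‖ ^ 2))
      = (∫ x in (0:ℝ)..1, ‖F n x‖ ^ 2) + ∫ x in (0:ℝ)..1, ‖G n x‖ ^ 2 := fun n =>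
    intervalIntegral.integral_add (MemLp.iisq (hF n)) (MemLp.iisq (hG n))
  constructor
  · refine squeeze_zero (fun n => nn _) (fun n => ?_) h
    rw [e]; linarith [nn (G n)]
  · refine squeeze_zero (fun n => nn _) (fun n => ?_) h
    rw [e]; linarith [nn (F n)]

lemma row (a b : ℂ) {κ y zh zc : ℝ → ℂ} {z' zhn zcn : ℕ → ℝ → ℂ} (γ : ℕ → ℂ)
    (hκ : MemLp κ 2 muI) (hy : MemLp y 2 muI) (hzh : MemLp zh 2 muI) (hzc : MemLp zc 2 muI)
    (hz' : ∀ n, MemLp (z' n) 2 muI) (hzhn : ∀ n, MemLp (zhn n) 2 muI)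
    (hzcn : ∀ n, MemLp (zcn n) 2 muI)
    (hh : Tendsto (fun n => ∫ x in (0:ℝ)..1, ‖zhn n x - zh x‖ ^ 2) atTop (nhds 0))
    (hc : Tendsto (fun n => ∫ x in (0:ℝ)..1, ‖zcn n x - zc x‖ ^ 2) atTop (nhds 0))
    (he : Tendsto (fun n => ∫ x in (0:ℝ)..1,
      ‖(a * z' n x + b * (zhn n x - zcn n x) - γ n * κ x) - y x‖ ^ 2) atTop (nhds 0))
    {x : ℝ} (hx : x ∈ Set.Icc (0:ℝ) 1) :
    Tendsto (fun n => a * (∫ t in (0:ℝ)..x, z' n t) - γ n * ∫ t in (0:ℝ)..x, κ t) atTop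
      (nhds ((∫ t in (0:ℝ)..x, y t)
        - b * ((∫ t in (0:ℝ)..x, zh t) - ∫ t in (0:ℝ)..x, zc t))) := by
  have t1 := int_tendsto (fun n => (hzhn n).sub hzh) hh hx
  have t2 := int_tendsto (fun n => (hzcn n).sub hzc) hc hx
  have t3 := int_tendsto (fun n => ((((hz' n).const_mul a).add
    (((hzhn n).sub (hzcn n)).const_mul b)).sub (hκ.const_mul (γ n))).sub hy) he hx
  have t := (t3.sub ((t1.sub t2).const_mul b)).add_const ((∫ t in (0:ℝ)..x, y t)
        - b * ((∫ t in (0:ℝ)..x, zh t) - ∫ t in (0:ℝ)..x, zc t))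
  simp only [sub_zero, mul_zero, zero_add] at t
  refine t.congr fun n => ?_
  have i1 := MemLp.iix (hz' n) hx
  have i2 := MemLp.iix (hzhn n) hx
  have i3 := MemLp.iix (hzcn n) hx
  have i4 := MemLp.iix hκ hx
  have i5 := MemLp.iix hy hx
  have i6 := MemLp.iix hzh hx
  have i7 := MemLp.iix hzc hx
  have e1 : (∫ t in (0:ℝ)..x, (zhn n - zh) t)
    = (∫ t in (0:ℝ)..x, zhn n t) - ∫ t in (0:ℝ)..x, zh t := intervalIntegral.integral_sub i2 i6
  have e2 : (∫ t in (0:ℝ)..x, (zcn n - zc) t)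
    = (∫ t in (0:ℝ)..x, zcn n t) - ∫ t in (0:ℝ)..x, zc t := intervalIntegral.integral_sub i3 i7
  have e3 : (∫ t in (0:ℝ)..x, ((a * z' n t + b * (zhn n t - zcn n t) - γ n * κ t) - y t))
    = a * (∫ t in (0:ℝ)..x, z' n t) + b * ((∫ t in (0:ℝ)..x, zhn n t)
      - ∫ t in (0:ℝ)..x, zcn n t) - γ n * (∫ t in (0:ℝ)..x, κ t) - ∫ t in (0:ℝ)..x, y t := by
    rw [intervalIntegral.integral_sub (((i1.const_mul a).add ((i2.sub i3).const_mul b)).sub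
        (i4.const_mul _)) i5,
      intervalIntegral.integral_sub ((i1.const_mul a).add ((i2.sub i3).const_mul b))
        (i4.const_mul _),
      intervalIntegral.integral_add (i1.const_mul a) ((i2.sub i3).const_mul b),
      intervalIntegral.integral_const_mul, intervalIntegral.integral_const_mul,
      intervalIntegral.integral_const_mul, intervalIntegral.integral_sub i2 i3]
  erw [e1, e2, e3]
  ring

lemma lin3 (a b γ : ℂ) {κ y zh zc : ℝ → ℂ} (hκ : MemLp κ 2 muI) (hy : MemLp y 2 muI)
    (hzh : MemLp zh 2 muI) (hzc : MemLp zc 2 muI) :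
    MemLp (fun x => a⁻¹ * (y x - b * (zh x - zc x) + γ * κ x)) 2 muI ∧
    ∀ x ∈ Set.Icc (0:ℝ) 1, (∫ t in (0:ℝ)..x, a⁻¹ * (y t - b * (zh t - zc t) + γ * κ t))
      = a⁻¹ * ((∫ t in (0:ℝ)..x, y t)
        - b * ((∫ t in (0:ℝ)..x, zh t) - ∫ t in (0:ℝ)..x, zc t)
        + γ * ∫ t in (0:ℝ)..x, κ t) := by
  refine ⟨((hy.sub ((hzh.sub hzc).const_mul b)).add (hκ.const_mul γ)).const_mul a⁻¹, ?_⟩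
  intro x hx
  have i4 := MemLp.iix hκ hx
  have i5 := MemLp.iix hy hx
  have i6 := MemLp.iix hzh hx
  have i7 := MemLp.iix hzc hx
  rw [intervalIntegral.integral_const_mul,
    intervalIntegral.integral_add (i5.sub ((i6.sub i7).const_mul b)) (i4.const_mul γ),
    intervalIntegral.integral_sub i5 ((i6.sub i7).const_mul b),
    intervalIntegral.integral_const_mul, intervalIntegral.integral_const_mul,
    intervalIntegral.integral_sub i6 i7]

lemma exists_pt {φ : ℝ → ℂ} (hφ : ContinuousOn φ (Set.Icc 0 1)) (h0 : φ 0 ≠ 0) {P : ℝ → Prop}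
    (hP : ∀ᵐ x ∂muI, P x) : ∃ x ∈ Set.Icc (0:ℝ) 1, φ x ≠ 0 ∧ P x := by
  have h1 : ∀ᶠ x in nhdsWithin 0 (Set.Icc (0:ℝ) 1), φ x ≠ 0 :=
    (hφ 0 (by simp)).eventually_ne h0
  rw [eventually_nhdsWithin_iff, Metric.eventually_nhds_iff] at h1
  obtain ⟨ε, hε, h1⟩ := h1
  by_contra hcon
  push Not at hcon
  rw [ae_restrict_iff' measurableSet_Ioc] at hP
  have hz : volume (Set.Ioo (0:ℝ) (min ε 1)) = 0 := by
    refine measure_mono_null ?_ (ae_iff.1 hP)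
    intro x hx
    have hxe := lt_of_lt_of_le hx.2 (min_le_left _ _)
    have hx1 := lt_of_lt_of_le hx.2 (min_le_right _ _)
    have hne := h1 (y := x) (by simpa [abs_of_pos hx.1] using hxe) ⟨hx.1.le, hx1.le⟩
    intro hh
    exact hcon x ⟨hx.1.le, hx1.le⟩ hne (hh ⟨hx.1, hx1.le⟩)
  simp at hz
  linarith

/-- the operator `A − κC` is closed: if `z_n ∈ D(A)`, `z_n → z` in `L²`, and
`w_n := A z_n − z_n^c(0)·κ → y` in `L²`, then `z` (after modification on a null set)
belongs to `D(A)` and satisfies `A z − z^c(0)·κ = y` a.e. on `[0,1]`. -/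
theorem A_minus_kappaC_closed
    (u₁ u₂ c₁ c₂ : ℝ) (hu₁ : 0 < u₁) (hu₂ : 0 < u₂) (hc₁ : 0 < c₁) (hc₂ : 0 < c₂)
    (κh κc : ℝ → ℂ) (hκh : MemL2 κh) (hκc : MemL2 κc)
    (zhn zcn zhn' zcn' : ℕ → ℝ → ℂ)
    (hH1 : ∀ n, IsH1 (zhn n) (zhn' n) ∧ IsH1 (zcn n) (zcn' n))
    (hbc : ∀ n, zhn n 0 = 0 ∧ zcn n 1 = 0)
    (zh zc yh yc : ℝ → ℂ)
    (hz : MemL2 zh ∧ MemL2 zc) (hy : MemL2 yh ∧ MemL2 yc)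
    (hzconv : Tendsto (fun n => ∫ x in (0:ℝ)..1,
        (‖zhn n x - zh x‖ ^ 2 + ‖zcn n x - zc x‖ ^ 2)) atTop (nhds 0))
    (hwconv : Tendsto (fun n => ∫ x in (0:ℝ)..1,
        (‖(-(u₁ : ℂ) * zhn' n x - (c₁ : ℂ) * (zhn n x - zcn n x) - zcn n 0 * κh x)
            - yh x‖ ^ 2 +
         ‖((u₂ : ℂ) * zcn' n x + (c₂ : ℂ) * (zhn n x - zcn n x) - zcn n 0 * κc x)
            - yc x‖ ^ 2)) atTop (nhds 0)) :
    ∃ Zh Zc Zh' Zc' : ℝ → ℂ,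
      IsH1 Zh Zh' ∧ IsH1 Zc Zc' ∧ Zh 0 = 0 ∧ Zc 1 = 0 ∧
      (∀ᵐ x ∂(volume.restrict (Set.Icc (0:ℝ) 1)), Zh x = zh x ∧ Zc x = zc x) ∧
      (∀ᵐ x ∂(volume.restrict (Set.Icc (0:ℝ) 1)),
        -(u₁ : ℂ) * Zh' x - (c₁ : ℂ) * (Zh x - Zc x) - Zc 0 * κh x = yh x ∧
        (u₂ : ℂ) * Zc' x + (c₂ : ℂ) * (Zh x - Zc x) - Zc 0 * κc x = yc x) := by
  have hκh := hκh.memLp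
  have hκc := hκc.memLp
  have mzh := hz.1.memLp
  have mzc := hz.2.memLp
  have myh := hy.1.memLp
  have myc := hy.2.memLp
  have m1 := fun n => (hH1 n).1.memLp
  have m2 := fun n => (hH1 n).2.memLp
  have m1' := fun n => (hH1 n).1.memLp'
  have m2' := fun n => (hH1 n).2.memLp'
  have U1 : (u₁ : ℂ) ≠ 0 := by exact_mod_cast hu₁.ne'
  have U2 : (u₂ : ℂ) ≠ 0 := by exact_mod_cast hu₂.ne'
  obtain ⟨dh, dc⟩ := split_sq (fun n => (m1 n).sub mzh) (fun n => (m2 n).sub mzc) hzconv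
  obtain ⟨eh, ec⟩ := split_sq
    (fun n => ((((m1' n).const_mul (-(u₁:ℂ))).sub
      (((m1 n).sub (m2 n)).const_mul (c₁:ℂ))).sub (hκh.const_mul (zcn n 0))).sub myh)
    (fun n => ((((m2' n).const_mul (u₂:ℂ)).add
      (((m1 n).sub (m2 n)).const_mul (c₂:ℂ))).sub (hκc.const_mul (zcn n 0))).sub myc) hwconv
  have rc := fun x hx => row (u₂:ℂ) (c₂:ℂ) (fun n => zcn n 0) hκc myc mzh mzc m2' m1 m2 dh dc ec
    (x := x) hx
  have eh' : Tendsto (fun n => ∫ x in (0:ℝ)..1,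
      ‖(-(u₁:ℂ) * zhn' n x + (-(c₁:ℂ)) * (zhn n x - zcn n x) - zcn n 0 * κh x) - yh x‖ ^ 2)
      atTop (nhds 0) := by
    simpa only [neg_mul, ← sub_eq_add_neg, Pi.sub_apply] using eh
  have rh := fun x hx => row (-(u₁:ℂ)) (-(c₁:ℂ)) (fun n => zcn n 0) hκh myh mzh mzc m1' m1 m2
    dh dc eh' (x := x) hx
  obtain ⟨ns, hns, aec⟩ := sub_ae (fun n => (m2 n).sub mzc) dc
  obtain ⟨ms, hms, aeh⟩ := sub_ae (F := fun n => zhn (ns n) - zh)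
    (fun n => (m1 (ns n)).sub mzh) (dh.comp hns.tendsto_atTop)
  have hs : Tendsto (fun n => ns (ms n)) atTop atTop :=
    hns.tendsto_atTop.comp hms.tendsto_atTop
  have aec' : ∀ᵐ x ∂muI, Tendsto (fun n => zcn (ns (ms n)) x) atTop (nhds (zc x)) := by
    filter_upwards [aec] with x hx
    have := (hx.comp hms.tendsto_atTop).add_const (zc x)
    simpa [Function.comp_def] using this
  have aeh' : ∀ᵐ x ∂muI, Tendsto (fun n => zhn (ns (ms n)) x) atTop (nhds (zh x)) := by
    filter_upwards [aeh] with x hx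
    have := hx.add_const (zh x)
    simpa using this
  obtain ⟨x0, hx0, hφ, hc0⟩ := exists_pt
    (φ := fun x => (u₂:ℂ) + ∫ t in (0:ℝ)..x, κc t) (isH1_of hκc _).1 (by simpa using U2) aec'
  -- the boundary values converge along the subsequence
  obtain ⟨γ, hγ⟩ : ∃ γ, Tendsto (fun n => zcn (ns (ms n)) 0) atTop (nhds γ) := by
    have h1 := ((hc0.const_mul (u₂:ℂ)).sub ((rc x0 hx0).comp hs)).div_const
      ((u₂:ℂ) + ∫ t in (0:ℝ)..x0, κc t)
    refine ⟨_, h1.congr fun n => ?_⟩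
    rw [div_eq_iff hφ]
    simp only [Function.comp_apply]
    rw [(hH1 (ns (ms n))).2.2.2.2 x0 hx0]
    ring
  obtain ⟨Lc, Ic⟩ := lin3 (u₂:ℂ) (c₂:ℂ) γ hκc myc mzh mzc
  obtain ⟨Lh, Ih⟩ := lin3 (-(u₁:ℂ)) (-(c₁:ℂ)) γ hκh myh mzh mzc
  have Tc : ∀ x ∈ Set.Icc (0:ℝ) 1, Tendsto (fun n => zcn (ns (ms n)) x) atTop
      (nhds (γ + ∫ t in (0:ℝ)..x, (u₂:ℂ)⁻¹ * (yc t - c₂ * (zh t - zc t) + γ * κc t))) := by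
    intro x hx
    rw [Ic x hx]
    refine (hγ.add ((((rc x hx).comp hs).add (hγ.mul_const _)).const_mul _)).congr fun n => ?_
    rw [(hH1 (ns (ms n))).2.2.2.2 x hx]
    simp only [Function.comp_apply]
    field_simp
    ring
  have Th : ∀ x ∈ Set.Icc (0:ℝ) 1, Tendsto (fun n => zhn (ns (ms n)) x) atTop
      (nhds (0 + ∫ t in (0:ℝ)..x,
        (-(u₁:ℂ))⁻¹ * (yh t - (-(c₁:ℂ)) * (zh t - zc t) + γ * κh t))) := by
    intro x hx
    rw [Ih x hx, zero_add]
    refine ((((rh x hx).comp hs).add (hγ.mul_const _)).const_mul _).congr fun n => ?_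
    rw [(hH1 (ns (ms n))).1.2.2.2 x hx, (hbc _).1]
    simp only [Function.comp_apply]
    field_simp
    ring
  have key : ∀ᵐ x ∂muI,
      (0 + ∫ t in (0:ℝ)..x, (-(u₁:ℂ))⁻¹ * (yh t - (-(c₁:ℂ)) * (zh t - zc t) + γ * κh t)) = zh x ∧
      (γ + ∫ t in (0:ℝ)..x, (u₂:ℂ)⁻¹ * (yc t - c₂ * (zh t - zc t) + γ * κc t)) = zc x := by
    filter_upwards [aec', aeh', ae_restrict_mem measurableSet_Ioc] with x h1 h2 h3
    exact ⟨tendsto_nhds_unique (Th x ⟨h3.1.le, h3.2⟩) h2,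
      tendsto_nhds_unique (Tc x ⟨h3.1.le, h3.2⟩) h1⟩
  rw [muI_eq]
  refine ⟨_, _, _, _, isH1_of Lh 0, isH1_of Lc γ, by simp, ?_, key, ?_⟩
  · refine tendsto_nhds_unique (Tc 1 (by simp)) ?_
    simp only [(hbc _).2]
    exact tendsto_const_nhds
  · filter_upwards [key] with x hx
    rw [hx.1, hx.2]
    simp only [intervalIntegral.integral_same, add_zero]
    constructor <;> field_simp <;> ring
end
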